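/- Let m, p, n, s, t, k be natural numbers with n ≤ p, s ≤ t, k > 2·p and k > 2·t, let a, b ∈ ℂ, and let φ(z) = a·z^p·conj(z)^n + b·z^s·conj(z)^t. Then for every z ∈ ℂ, (T_φ (T_φ (w ↦ w^k)))(z) = a²·((p+k+m)!·(2p+k+m−n)!/((p+k+m−n)!·(2p+k+m−2n)!))·z^{2p+k−2n} + a·b·( (s+k+m)!·(s+k+m+p−t)!/((s+k+m−t)!·(s+k+m+p−t−n)!) + (p+k+m)!·(p+k+m+s−n)!/((p+k+m−n)!·(p+k+m+s−n−t)!) )·z^{s+p+k−t−n} + b²·((s+k+m)!·(2s+k+m−t)!/((s+k+m−t)!·(2s+k+m−2t)!))·z^{2s+k−2t}. -/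

import Mathlib

/-!
On monomials the Toeplitz operator with symbol `w ^ p * conj w ^ n` is a weighted shift:
for `B ≤ A`, integrating `w ^ A * conj w ^ B` against `K_m(z, w) |w|^{2m} e^{-|w|²}` gives
`π * m! * (A + m)! / (A - B + m)! * z ^ (A - B)` (`integral_monomial_kernel`). Indeed, expanding the
kernel into its power series, rotation invariance of Lebesgue measure kills every term except
`j = A - B` (`integral_monomial_eq_zero`), and that term is a Gaussian moment
(`integral_norm_pow_mul_exp`). Sum and integral may be exchanged because the absolute series is
dominated by `e^{|z||w|} |w|^{A+B+2m} e^{-|w|²}`, which is at most a constant times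
`|w|^{A+B+2m} e^{-|w|²/2}`. The theorem follows by linearity, applying this twice.
-/

open MeasureTheory Complex ComplexOrder

/-- Weight function: `|z|^{2m} e^{-|z|^2}` as a complex number. -/
noncomputable def fsWt (m : ℕ) (z : ℂ) : ℂ :=
  ((‖z‖ : ℝ) : ℂ) ^ (2 * m) * ((Real.exp (-‖z‖ ^ 2) : ℝ) : ℂ)

/-- Fock–Sobolev reproducing kernel `K_m(z,w)`. -/
noncomputable def fsKernel (m : ℕ) (z w : ℂ) : ℂ :=
  ∑' j : ℕ, ((m.factorial : ℂ) / ((j + m).factorial : ℂ)) * (z * starRingEnd ℂ w) ^ j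

/-- Toeplitz operator with symbol `ψ` acting on `f`, evaluated at `z`. -/
noncomputable def fsToeplitz (m : ℕ) (ψ f : ℂ → ℂ) (z : ℂ) : ℂ :=
  (1 / ((Real.pi : ℂ) * (m.factorial : ℂ))) *
    ∫ w : ℂ, ψ w * f w * fsKernel m z w * fsWt m w

/-- Fock–Sobolev pairing `⟨g, h⟩`. -/
noncomputable def fsPair (m : ℕ) (g h : ℂ → ℂ) : ℂ :=
  ∫ z : ℂ, g z * starRingEnd ℂ (h z) * fsWt m z

/-- `‖g‖² = ⟨g, g⟩`. -/
noncomputable def fsNormSq (m : ℕ) (g : ℂ → ℂ) : ℂ := fsPair m g g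

open scoped ComplexConjugate

theorem integrable_norm_pow_mul_exp (N : ℕ) {b : ℝ} (hb : 0 < b) :
    Integrable (fun w : ℂ => ‖w‖ ^ N * Real.exp (-b * ‖w‖ ^ 2)) := by
  have hN : (-2 : ℝ) < N := by have : (0 : ℝ) ≤ N := N.cast_nonneg; linarith
  have h := Complex.integral_rpow_mul_exp_neg_mul_rpow (p := 2) (q := N) (b := b)
    (by norm_num) hN hb
  simp only [Real.rpow_natCast, Real.rpow_ofNat] at h
  -- A non-integrable function would have Bochner integral `0`.
  refine Integrable.of_integral_ne_zero ?_
  rw [h]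
  have : 0 < Real.Gamma ((N + 2 : ℝ) / 2) := Real.Gamma_pos_of_pos (by linarith)
  positivity

theorem integral_norm_pow_mul_exp (N : ℕ) :
    ∫ w : ℂ, ‖w‖ ^ (2 * N) * Real.exp (-‖w‖ ^ 2) = Real.pi * N.factorial := by
  have hN : (-2 : ℝ) < (2 * N : ℕ) := by
    have : (0 : ℝ) ≤ (2 * N : ℕ) := Nat.cast_nonneg _
    linarith
  have h := Complex.integral_rpow_mul_exp_neg_rpow (p := 2) (q := (2 * N : ℕ)) (by norm_num) hN
  simp only [Real.rpow_natCast, Real.rpow_ofNat] at h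
  rw [h, show (((2 * N : ℕ) : ℝ) + 2) / 2 = N + 1 by push_cast; ring, Real.Gamma_nat_eq_factorial]
  ring

theorem norm_fsWt (m : ℕ) (w : ℂ) : ‖fsWt m w‖ = ‖w‖ ^ (2 * m) * Real.exp (-‖w‖ ^ 2) := by
  simp [fsWt, abs_of_pos, Real.exp_pos, -Complex.ofReal_exp]

theorem continuous_fsWt (m : ℕ) : Continuous (fsWt m) := by
  unfold fsWt
  fun_prop

/-- Monomials of nonzero weight under rotation integrate to zero against the radial weight: the
rotation by `c = exp (iπ / (A - B))` preserves the integral and multiplies the integrand by `-1`. -/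
theorem integral_monomial_eq_zero (m A B : ℕ) (h : A ≠ B) :
    ∫ w : ℂ, w ^ A * conj w ^ B * fsWt m w = 0 := by
  have hd : (A : ℂ) - B ≠ 0 := sub_ne_zero.mpr (by exact_mod_cast h)
  let c : Circle := Circle.exp (Real.pi / ((A : ℝ) - B))
  have hc : (c : ℂ) ^ A * conj (c : ℂ) ^ B = -1 := by
    rw [← Circle.coe_inv_eq_conj, ← Circle.exp_neg, Circle.coe_exp, Circle.coe_exp,
      ← Complex.exp_nat_mul, ← Complex.exp_nat_mul, ← Complex.exp_add, ← Complex.exp_pi_mul_I]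
    congr 1
    push_cast
    field_simp
    ring
  have key := (rotation c).measurePreserving.integral_comp
    (rotation c).toHomeomorph.measurableEmbedding
    (fun w : ℂ => w ^ A * conj w ^ B * fsWt m w)
  have hpt : ∀ w : ℂ, (rotation c w) ^ A * conj (rotation c w) ^ B * fsWt m (rotation c w)
      = -(w ^ A * conj w ^ B * fsWt m w) := by
    intro w
    have hw : fsWt m (rotation c w) = fsWt m w := by
      simp only [fsWt, LinearIsometryEquiv.norm_map]
    rw [hw, rotation_apply, map_mul, mul_pow, mul_pow]
    linear_combination (w ^ A * conj w ^ B * fsWt m w) * hc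
  simp only [hpt, integral_neg] at key
  exact self_eq_neg.mp key.symm

theorem integral_monomial_self (m A : ℕ) :
    ∫ w : ℂ, w ^ A * conj w ^ A * fsWt m w = Real.pi * (A + m).factorial := by
  have hpt : ∀ w : ℂ, w ^ A * conj w ^ A * fsWt m w
      = ((‖w‖ ^ (2 * (A + m)) * Real.exp (-‖w‖ ^ 2) : ℝ) : ℂ) := by
    intro w
    rw [← mul_pow, Complex.mul_conj, Complex.normSq_eq_norm_sq, fsWt]
    push_cast
    ring
  simp only [hpt]
  rw [integral_complex_ofReal, integral_norm_pow_mul_exp]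
  push_cast
  rfl

theorem kernel_coeff_le (m j : ℕ) :
    (m.factorial : ℝ) / (j + m).factorial ≤ 1 / j.factorial := by
  rw [div_le_div_iff₀ (by positivity) (by positivity), one_mul]
  have h := Nat.le_of_dvd (Nat.factorial_pos _) (Nat.factorial_mul_factorial_dvd_factorial_add j m)
  rw [mul_comm]
  exact_mod_cast h

theorem norm_kernel_term_le (m j : ℕ) (z w : ℂ) :
    ‖((m.factorial : ℂ) / ((j + m).factorial : ℂ)) * (z * conj w) ^ j‖
      ≤ (‖z‖ * ‖w‖) ^ j / j.factorial := by
  have h := mul_le_mul_of_nonneg_right (kernel_coeff_le m j)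
    (show 0 ≤ (‖z‖ * ‖w‖) ^ j by positivity)
  calc _ = (m.factorial : ℝ) / (j + m).factorial * (‖z‖ * ‖w‖) ^ j := by simp
    _ ≤ _ := h
    _ = _ := by ring

theorem hasSum_exp_norm (z w : ℂ) :
    HasSum (fun j : ℕ => (‖z‖ * ‖w‖) ^ j / j.factorial) (Real.exp (‖z‖ * ‖w‖)) := by
  rw [Real.exp_eq_exp_ℝ]
  exact NormedSpace.expSeries_div_hasSum_exp _

theorem hasSum_fsKernel (m : ℕ) (z w : ℂ) :
    HasSum (fun j : ℕ => ((m.factorial : ℂ) / ((j + m).factorial : ℂ)) * (z * conj w) ^ j)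
      (fsKernel m z w) :=
  (Summable.of_norm_bounded (hasSum_exp_norm z w).summable
    (fun j => norm_kernel_term_le m j z w)).hasSum

theorem norm_fsKernel_le (m : ℕ) (z w : ℂ) : ‖fsKernel m z w‖ ≤ Real.exp (‖z‖ * ‖w‖) :=
  tsum_of_norm_bounded (hasSum_exp_norm z w) (fun j => norm_kernel_term_le m j z w)

theorem aestronglyMeasurable_fsKernel (m : ℕ) (z : ℂ) :
    AEStronglyMeasurable (fun w : ℂ => fsKernel m z w) := by
  refine aestronglyMeasurable_of_tendsto_ae Filter.atTop
    (f := fun N : ℕ => fun w : ℂ => ∑ j ∈ Finset.range N,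
      ((m.factorial : ℂ) / ((j + m).factorial : ℂ)) * (z * conj w) ^ j) (fun N => ?_) ?_
  · exact Continuous.aestronglyMeasurable (by fun_prop)
  · exact Filter.Eventually.of_forall fun w => (hasSum_fsKernel m z w).tendsto_sum_nat

/-- The integrable majorant that justifies every interchange; it comes from
`|z||w| ≤ |z|²/2 + |w|²/2`. -/
theorem integrable_exp_majorant (N : ℕ) (r : ℝ) :
    Integrable (fun w : ℂ => Real.exp (r * ‖w‖) * (‖w‖ ^ N * Real.exp (-‖w‖ ^ 2))) := by
  refine ((integrable_norm_pow_mul_exp N (b := 1 / 2) (by norm_num)).const_mul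
    (Real.exp (r ^ 2 / 2))).mono' (Continuous.aestronglyMeasurable (by fun_prop)) ?_
  refine Filter.Eventually.of_forall fun w => ?_
  rw [Real.norm_of_nonneg (by positivity)]
  have h : Real.exp (r * ‖w‖) * Real.exp (-‖w‖ ^ 2)
      ≤ Real.exp (r ^ 2 / 2) * Real.exp (-(1 / 2) * ‖w‖ ^ 2) := by
    rw [← Real.exp_add, ← Real.exp_add]
    apply Real.exp_le_exp.mpr
    nlinarith [sq_nonneg (r - ‖w‖)]
  have := mul_le_mul_of_nonneg_left h (show 0 ≤ ‖w‖ ^ N by positivity)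
  linarith

theorem norm_monomial_mul_fsWt (m A B : ℕ) (w : ℂ) :
    ‖w ^ A * conj w ^ B * fsWt m w‖ = ‖w‖ ^ (A + B + 2 * m) * Real.exp (-‖w‖ ^ 2) := by
  rw [norm_mul, norm_fsWt, norm_mul, norm_pow, norm_pow, RCLike.norm_conj]
  ring

theorem continuous_monomial_mul_fsWt (m A B : ℕ) :
    Continuous (fun w : ℂ => w ^ A * conj w ^ B * fsWt m w) := by
  have := continuous_fsWt m
  fun_prop

theorem integrable_monomial_kernel (m A B : ℕ) (z : ℂ) :
    Integrable (fun w : ℂ => fsKernel m z w * (w ^ A * conj w ^ B * fsWt m w)) := by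
  refine (integrable_exp_majorant (A + B + 2 * m) ‖z‖).mono'
    ((aestronglyMeasurable_fsKernel m z).mul
      (continuous_monomial_mul_fsWt m A B).aestronglyMeasurable) ?_
  refine Filter.Eventually.of_forall fun w => ?_
  rw [norm_mul, norm_monomial_mul_fsWt]
  exact mul_le_mul_of_nonneg_right (norm_fsKernel_le m z w) (by positivity)

theorem integral_monomial_kernel (m A B : ℕ) (h : B ≤ A) (z : ℂ) :
    ∫ w : ℂ, fsKernel m z w * (w ^ A * conj w ^ B * fsWt m w)
      = Real.pi * m.factorial * ((A + m).factorial / (A - B + m).factorial) * z ^ (A - B) := by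
  let F : ℕ → ℂ → ℂ := fun j w =>
    ((m.factorial : ℂ) / ((j + m).factorial : ℂ)) * (z * conj w) ^ j *
      (w ^ A * conj w ^ B * fsWt m w)
  have hsum : HasSum (fun j => ∫ w, F j w)
      (∫ w : ℂ, fsKernel m z w * (w ^ A * conj w ^ B * fsWt m w)) := by
    have hb : ∀ w : ℂ, HasSum (fun j : ℕ => (‖z‖ * ‖w‖) ^ j / j.factorial *
        (‖w‖ ^ (A + B + 2 * m) * Real.exp (-‖w‖ ^ 2)))
        (Real.exp (‖z‖ * ‖w‖) * (‖w‖ ^ (A + B + 2 * m) * Real.exp (-‖w‖ ^ 2))) :=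
      fun w => (hasSum_exp_norm z w).mul_right _
    refine hasSum_integral_of_dominated_convergence
      (fun (j : ℕ) (w : ℂ) => (‖z‖ * ‖w‖) ^ j / j.factorial *
        (‖w‖ ^ (A + B + 2 * m) * Real.exp (-‖w‖ ^ 2))) (fun j => ?_) (fun j => ?_) ?_ ?_ ?_
    · have := continuous_monomial_mul_fsWt m A B
      exact Continuous.aestronglyMeasurable (by fun_prop)
    · refine Filter.Eventually.of_forall fun w => ?_
      rw [norm_mul, norm_monomial_mul_fsWt]
      exact mul_le_mul_of_nonneg_right (norm_kernel_term_le m j z w) (by positivity)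
    · exact Filter.Eventually.of_forall fun w => (hb w).summable
    · simp only [fun w => (hb w).tsum_eq]
      exact integrable_exp_majorant _ _
    · exact Filter.Eventually.of_forall fun w => (hasSum_fsKernel m z w).mul_right _
  have hF : ∀ j, ∫ w, F j w = ((m.factorial : ℂ) / ((j + m).factorial : ℂ)) * z ^ j *
      ∫ w : ℂ, w ^ A * conj w ^ (B + j) * fsWt m w := by
    intro j
    rw [← integral_const_mul]
    congr 1
    funext w
    simp only [F]
    ring
  -- Only the term `j = A - B` has total weight zero under rotations.
  have hsingle := hasSum_single (f := fun j => ∫ w, F j w) (A - B) (fun j hj => by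
    rw [hF, integral_monomial_eq_zero m A (B + j) (by omega), mul_zero])
  rw [hsum.unique hsingle, hF, show B + (A - B) = A by omega, integral_monomial_self]
  ring

/-- The action of the Toeplitz operator on a binomial `c₁ w ^ q₁ + c₂ w ^ q₂`, by linearity. -/
theorem fsToeplitz_binomial (m p n s t q₁ q₂ : ℕ) (a b c₁ c₂ : ℂ) (h₁ : n ≤ p + q₁)
    (h₂ : n ≤ p + q₂) (h₃ : t ≤ s + q₁) (h₄ : t ≤ s + q₂) (z : ℂ) :
    fsToeplitz m (fun z => a * z ^ p * conj z ^ n + b * z ^ s * conj z ^ t)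
      (fun w => c₁ * w ^ q₁ + c₂ * w ^ q₂) z
    = a * c₁ * ((p + q₁ + m).factorial / (p + q₁ - n + m).factorial) * z ^ (p + q₁ - n)
      + a * c₂ * ((p + q₂ + m).factorial / (p + q₂ - n + m).factorial) * z ^ (p + q₂ - n)
      + b * c₁ * ((s + q₁ + m).factorial / (s + q₁ - t + m).factorial) * z ^ (s + q₁ - t)
      + b * c₂ * ((s + q₂ + m).factorial / (s + q₂ - t + m).factorial) * z ^ (s + q₂ - t) := by
  let G : ℕ → ℕ → ℂ → ℂ := fun A B w => fsKernel m z w * (w ^ A * conj w ^ B * fsWt m w)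
  have hG : ∀ (A B : ℕ) (c : ℂ), Integrable (fun w => c * G A B w) := fun A B c =>
    (integrable_monomial_kernel m A B z).const_mul c
  have hI : ∀ (A B : ℕ) (c : ℂ), B ≤ A → ∫ w, c * G A B w = c * (Real.pi * m.factorial *
      ((A + m).factorial / (A - B + m).factorial) * z ^ (A - B)) := fun A B c h => by
    rw [integral_const_mul, integral_monomial_kernel m A B h z]
  have hpi : (Real.pi : ℂ) ≠ 0 := by exact_mod_cast Real.pi_ne_zero
  have hm : (m.factorial : ℂ) ≠ 0 := by exact_mod_cast m.factorial_ne_zero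
  have hexp : ∀ w : ℂ, (a * w ^ p * conj w ^ n + b * w ^ s * conj w ^ t) *
      (c₁ * w ^ q₁ + c₂ * w ^ q₂) * fsKernel m z w * fsWt m w
      = a * c₁ * G (p + q₁) n w + a * c₂ * G (p + q₂) n w + b * c₁ * G (s + q₁) t w
        + b * c₂ * G (s + q₂) t w := by
    intro w
    simp only [G]
    ring
  rw [fsToeplitz]
  simp only [hexp]
  rw [integral_add (((hG _ _ _).fun_add (hG _ _ _)).fun_add (hG _ _ _)) (hG _ _ _),
    integral_add ((hG _ _ _).fun_add (hG _ _ _)) (hG _ _ _), integral_add (hG _ _ _) (hG _ _ _),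
    hI _ _ _ h₁, hI _ _ _ h₂, hI _ _ _ h₃, hI _ _ _ h₄]
  generalize ((p + q₁ + m).factorial : ℂ) / (p + q₁ - n + m).factorial = e₁
  generalize ((p + q₂ + m).factorial : ℂ) / (p + q₂ - n + m).factorial = e₂
  generalize ((s + q₁ + m).factorial : ℂ) / (s + q₁ - t + m).factorial = e₃
  generalize ((s + q₂ + m).factorial : ℂ) / (s + q₂ - t + m).factorial = e₄
  field_simp

theorem stmt14 (m p n s t k : ℕ) (hn : n ≤ p) (hs : s ≤ t)
    (hk1 : k > 2 * p) (hk2 : k > 2 * t) (a b : ℂ) (φ : ℂ → ℂ) (hφ : φ = fun z => a * z ^ p * (starRingEnd ℂ z) ^ n + b * z ^ s * (starRingEnd ℂ z) ^ t) :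
    ∀ z : ℂ, fsToeplitz m φ (fsToeplitz m φ (fun w => w ^ k)) z =
      a ^ 2 * (((p + k + m).factorial : ℂ) * ((2 * p + k + m - n).factorial : ℂ)
          / (((p + k + m - n).factorial : ℂ) * ((2 * p + k + m - 2 * n).factorial : ℂ)))
          * z ^ (2 * p + k - 2 * n)
      + a * b * ((((s + k + m).factorial : ℂ) * ((s + k + m + p - t).factorial : ℂ)
            / (((s + k + m - t).factorial : ℂ) * ((s + k + m + p - t - n).factorial : ℂ)))
          + (((p + k + m).factorial : ℂ) * ((p + k + m + s - n).factorial : ℂ)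
            / (((p + k + m - n).factorial : ℂ) * ((p + k + m + s - n - t).factorial : ℂ))))
          * z ^ (s + p + k - t - n)
      + b ^ 2 * (((s + k + m).factorial : ℂ) * ((2 * s + k + m - t).factorial : ℂ)
          / (((s + k + m - t).factorial : ℂ) * ((2 * s + k + m - 2 * t).factorial : ℂ)))
          * z ^ (2 * s + k - 2 * t) := by
  subst hφ
  intro z
  have hfirst : fsToeplitz m
      (fun z => a * z ^ p * (starRingEnd ℂ z) ^ n + b * z ^ s * (starRingEnd ℂ z) ^ t)
      (fun w => w ^ k)
      = fun w => (a * ((p + k + m).factorial / (p + k - n + m).factorial)) * w ^ (p + k - n)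
        + (b * ((s + k + m).factorial / (s + k - t + m).factorial)) * w ^ (s + k - t) := by
    funext w
    have h := fsToeplitz_binomial m p n s t k k a b 1 0 (by omega) (by omega) (by omega)
      (by omega) w
    simpa using h
  rw [hfirst, fsToeplitz_binomial m p n s t _ _ _ _ _ _ (by omega) (by omega) (by omega)
    (by omega)]
  -- Bring the truncated subtractions to the form in which they occur in the claim.
  rw [show p + k - n + m = p + k + m - n by omega,
    show s + k - t + m = s + k + m - t by omega,
    show p + (p + k - n) + m = 2 * p + k + m - n by omega,
    show p + (p + k - n) - n + m = 2 * p + k + m - 2 * n by omega,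
    show p + (p + k - n) - n = 2 * p + k - 2 * n by omega,
    show p + (s + k - t) + m = s + k + m + p - t by omega,
    show p + (s + k - t) - n + m = s + k + m + p - t - n by omega,
    show p + (s + k - t) - n = s + p + k - t - n by omega,
    show s + (p + k - n) + m = p + k + m + s - n by omega,
    show s + (p + k - n) - t + m = p + k + m + s - n - t by omega,
    show s + (p + k - n) - t = s + p + k - t - n by omega,
    show s + (s + k - t) + m = 2 * s + k + m - t by omega,
    show s + (s + k - t) - t + m = 2 * s + k + m - 2 * t by omega,
    show s + (s + k - t) - t = 2 * s + k - 2 * t by omega]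
  simp only [mul_div_mul_comm]
  ring
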